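/- arXiv:1607.08058 — 4 statements merged into one kernel-verified Lean document; each statement's English description precedes it below -/
import Mathlib

section
/- Let G be a finite connected graph and let P be a shortest path between a pair of vertices of G. Then a single cop has a strategy in the game of cops and robber on G such that, after a finite number of initial moves, the cop guards P: that is, there is a time T (depending on the play) such that after time T, whenever the robber moves to a vertex of P, he is captured by the cop's next move. -/
/-!  The game of cops and robber on a graph.

The cops first choose starting vertices, then the robber chooses a starting vertex;
the players then alternate turns, the cops moving first; each piece either stays or
moves to an adjacent vertex.  A cop strategy chooses, at each cop turn, the new cop
positions as a function of the full history of robber positions (which, together with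
the strategy itself, determines the full history of the play).  The robber, having
full information, is modelled as an arbitrary legal trajectory.  -/

/-- The sequence of cop positions determined by the initial placement `init`, the cop
strategy `F` (a function of the history of robber positions), and the robber trajectory
`rob`; `copSeq init F rob n` is the position of the cops before the robber's `n`-th move,
i.e. the cops' `(n+1)`-st positions respond to the robber positions `rob 0, …, rob n`. -/
def copSeq {V : Type*} {k : ℕ} (init : Fin k → V) (F : List V → Fin k → V)
    (rob : ℕ → V) : ℕ → Fin k → V
  | 0 => init
  | n + 1 => F ((List.range (n + 1)).map rob)

/-- A robber trajectory is legal if at each turn the robber stays or moves along an edge. -/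
def RobberLegal {V : Type*} (G : SimpleGraph V) (rob : ℕ → V) : Prop :=
  ∀ n, rob (n + 1) = rob n ∨ G.Adj (rob n) (rob (n + 1))

/-- A sequence of cop positions is legal if at each turn every cop stays or moves along an edge. -/
def CopsLegal {V : Type*} {k : ℕ} (G : SimpleGraph V) (c : ℕ → Fin k → V) : Prop :=
  ∀ n i, c (n + 1) i = c n i ∨ G.Adj (c n i) (c (n + 1) i)

/-- `k` cops have a winning strategy on `G`: there are initial positions and a legal
strategy capturing every legal robber trajectory in finitely many turns (a cop occupies
the robber's vertex, either after the cops' move or after the robber's move). -/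
def CopWin {V : Type*} (G : SimpleGraph V) (k : ℕ) : Prop :=
  ∃ (init : Fin k → V) (F : List V → Fin k → V),
    ∀ rob : ℕ → V, RobberLegal G rob →
      CopsLegal G (copSeq init F rob) ∧
      ∃ n i, copSeq init F rob n i = rob n ∨ copSeq init F rob (n + 1) i = rob n

/-- The cop number of `G`: the least `k` such that `k` cops have a winning strategy. -/
noncomputable def copNumber {V : Type*} (G : SimpleGraph V) : ℕ :=
  sInf { k | CopWin G k }

/-!
The map `x ↦ P.getVert (G.dist u x)` is a retraction of `G` onto the geodesic `P`: `getVert` is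
constantly `v` past the end of `P`, adjacent vertices have distances from `u` differing by at most
one, and since `P` is shortest its `i`-th vertex is at distance `i` from `u`. Once the cop sits on
the image of the robber under this retraction he can stay there, and then captures the robber
whenever the robber stands on `P`. To get there, the cop starts at `u` and occupies the vertex of
index `min n (G.dist u x)` on his `n`-th move, where `x` is the robber's position. These indices
again change by at most one per turn, and the truncation by `n` is void on `P` once
`n ≥ P.length`.
-/

/-- Walking along `P`, staying at the last vertex once it is reached, is a legal way to move:
indices differing by at most one give equal or adjacent vertices. -/
lemma getVert_eq_or_adj {V : Type*} {G : SimpleGraph V} {u v : V} (P : G.Walk u v) {a b : ℕ}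
    (hab : a ≤ b + 1) (hba : b ≤ a + 1) :
    P.getVert b = P.getVert a ∨ G.Adj (P.getVert a) (P.getVert b) := by
  have step : ∀ i, P.getVert (i + 1) = P.getVert i ∨
      G.Adj (P.getVert i) (P.getVert (i + 1)) := by
    intro i
    by_cases hi : i < P.length
    · exact Or.inr (P.adj_getVert_succ hi)
    · left
      rw [P.getVert_of_length_le (by omega), P.getVert_of_length_le (by omega)]
  obtain rfl | rfl | rfl : b = a ∨ b = a + 1 ∨ a = b + 1 := by omega
  · exact Or.inl rfl
  · exact step a
  · exact (step b).imp Eq.symm SimpleGraph.Adj.symm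

lemma dist_getVert_of_shortest {V : Type*} {G : SimpleGraph V} (hconn : G.Connected) {u v : V}
    (P : G.Walk u v) (hshort : P.length = G.dist u v) {i : ℕ} (hi : i ≤ P.length) :
    G.dist u (P.getVert i) = i := by
  have h1 := SimpleGraph.dist_le (P.take i)
  have h2 := SimpleGraph.dist_le (P.drop i)
  have h3 := hconn.dist_triangle (u := u) (v := P.getVert i) (w := v)
  rw [SimpleGraph.Walk.take_length] at h1
  rw [SimpleGraph.Walk.drop_length] at h2
  omega

lemma dist_le_dist_add_one {V : Type*} {G : SimpleGraph V} (hconn : G.Connected) (u : V) {x y : V}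
    (h : y = x ∨ G.Adj x y) :
    G.dist u x ≤ G.dist u y + 1 ∧ G.dist u y ≤ G.dist u x + 1 := by
  rcases h with rfl | h
  · omega
  · have h1 := hconn.dist_triangle (u := u) (v := x) (w := y)
    have h2 := hconn.dist_triangle (u := u) (v := y) (w := x)
    rw [SimpleGraph.dist_eq_one_iff_adj.2 h] at h1
    rw [SimpleGraph.dist_eq_one_iff_adj.2 h.symm] at h2
    omega

/-- Aigner–Fromme: a single cop can guard a shortest path `P`.  There is a strategy for
one cop such that in every play there is a time `T` after which, whenever the robber
stands on a vertex of `P`, the cop captures him on his next move. -/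
theorem one_cop_guards_shortest_path (V : Type) [Fintype V] (G : SimpleGraph V)
    (hconn : G.Connected) (u v : V) (P : G.Walk u v) (hP : P.IsPath)
    (hshort : P.length = G.dist u v) :
    ∃ (init : Fin 1 → V) (F : List V → Fin 1 → V),
      ∀ rob : ℕ → V, RobberLegal G rob →
        CopsLegal G (copSeq init F rob) ∧
        ∃ T : ℕ, ∀ n, T ≤ n → rob n ∈ P.support →
          copSeq init F rob (n + 1) 0 = rob n := by
  -- The default `u` of `getD` is never used: the history always contains `rob 0`.
  let F : List V → Fin 1 → V := fun l _ =>
    P.getVert (min l.length (G.dist u (l.getLast?.getD u)))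
  refine ⟨fun _ => u, F, fun rob hrob => ?_⟩
  have hF : ∀ n i, copSeq (fun _ => u) F rob (n + 1) i =
      P.getVert (min (n + 1) (G.dist u (rob n))) := by
    intro n i
    simp [copSeq, F, List.range_succ]
  refine ⟨fun n i => ?_, P.length, fun n hn hmem => ?_⟩
  · rw [hF]
    cases n with
    | zero =>
      have h := getVert_eq_or_adj P (a := 0) (b := min (0 + 1) (G.dist u (rob 0)))
        (by omega) (by omega)
      rwa [P.getVert_zero] at h
    | succ n =>
      rw [hF]
      have h := dist_le_dist_add_one hconn u (hrob n)
      exact getVert_eq_or_adj P (by omega) (by omega)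
  · obtain ⟨i, hi, hle⟩ := SimpleGraph.Walk.mem_support_iff_exists_getVert.1 hmem
    rw [hF, ← hi, dist_getVert_of_shortest hconn P hshort hle, min_eq_right (by omega)]
end

section
/- Let G be a finite connected graph, let D ⊆ V(G), and let P be a shortest path relative to D. Suppose the robber is confined to D, i.e., the robber occupies a vertex of D and moves only within G[D] (he is immediately captured upon leaving D). Then five cops have a strategy such that, after a finite number of initial moves, they guard the closed neighborhood N[P]: whenever the robber thereafter moves to a vertex of N[P], he is captured on the cops' next move. -/
/-- Index on the path `p 0, …, p L` aimed at by cop `i` when the robber is at distance `d` from `p 0`: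
`d + i - 2` clamped to `[0, L]` (truncated subtraction provides the lower clamp). -/
def pathTarget (L d : ℕ) (i : Fin 5) : ℕ := min L (d + i - 2)

open Classical in
/-- Position of cop `i` before the robber's `n`-th move, against the trajectory `rob`: he steps onto
the robber if he can, and otherwise goes to his vertex on the path `p`. -/
noncomputable def guardPos {V : Type*} (G : SimpleGraph V) (p : ℕ → V) (L : ℕ) (d : V → ℕ)
    (rob : ℕ → V) (i : Fin 5) : ℕ → V
  | 0 => p 0
  | n + 1 =>
    if guardPos G p L d rob i n = rob n ∨ G.Adj (guardPos G p L d rob i n) (rob n) then rob n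
    else p (min (n + 1) (pathTarget L (d (rob n)) i))

theorem guardPos_congr {V : Type*} (G : SimpleGraph V) (p : ℕ → V) (L : ℕ) (d : V → ℕ)
    (r s : ℕ → V) (i : Fin 5) (n : ℕ) (h : ∀ m < n, r m = s m) :
    guardPos G p L d r i n = guardPos G p L d s i n := by
  induction n with
  | zero => rfl
  | succ n ih =>
    simp only [guardPos]
    rw [ih fun m hm => h m (by omega), h n (by omega)]

/-- `guardPos` as a strategy on histories; the default value of `getD` is never read. -/
noncomputable def guardStrategy {V : Type*} (G : SimpleGraph V) (p : ℕ → V) (L : ℕ) (d : V → ℕ)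
    (l : List V) (i : Fin 5) : V :=
  guardPos G p L d (fun m => l.getD m (p 0)) i l.length

theorem copSeq_guardStrategy {V : Type*} (G : SimpleGraph V) (p : ℕ → V) (L : ℕ) (d : V → ℕ)
    (rob : ℕ → V) (n : ℕ) (i : Fin 5) :
    copSeq (fun _ => p 0) (guardStrategy G p L d) rob n i = guardPos G p L d rob i n := by
  cases n with
  | zero => rfl
  | succ n =>
    simp only [copSeq, guardStrategy, List.length_map, List.length_range]
    apply guardPos_congr
    intro m hm
    simp [List.getD, hm]

/-- A cop is either on his vertex of the path, or on the robber's previous position. -/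
theorem guardPos_cases {V : Type*} (G : SimpleGraph V) (p : ℕ → V) (L : ℕ) (d : V → ℕ)
    (rob : ℕ → V) (i : Fin 5) (n : ℕ) :
    guardPos G p L d rob i (n + 1) = rob n ∨
      guardPos G p L d rob i (n + 1) = p (min (n + 1) (pathTarget L (d (rob n)) i)) := by
  rw [guardPos]
  split_ifs <;> simp

theorem guardPos_succ_of_near {V : Type*} (G : SimpleGraph V) (p : ℕ → V) (L : ℕ) (d : V → ℕ)
    (rob : ℕ → V) (i : Fin 5) (n : ℕ)
    (h : rob n = guardPos G p L d rob i n ∨ G.Adj (guardPos G p L d rob i n) (rob n)) :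
    guardPos G p L d rob i (n + 1) = rob n := by
  rw [guardPos, if_pos (h.imp_left Eq.symm)]

theorem guardPos_legal {V : Type*} (G : SimpleGraph V) (p : ℕ → V) (L : ℕ) (d : V → ℕ)
    (hp : ∀ j < L, G.Adj (p j) (p (j + 1))) (rob : ℕ → V) (hrob : RobberLegal G rob)
    (hd : ∀ n, d (rob (n + 1)) ≤ d (rob n) + 1 ∧ d (rob n) ≤ d (rob (n + 1)) + 1)
    (i : Fin 5) (n : ℕ) :
    guardPos G p L d rob i (n + 1) = guardPos G p L d rob i n ∨
      G.Adj (guardPos G p L d rob i n) (guardPos G p L d rob i (n + 1)) := by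
  have step : ∀ a b, a ≤ L → b ≤ L → a ≤ b + 1 → b ≤ a + 1 → p b = p a ∨ G.Adj (p a) (p b) := by
    intro a b ha hb h1 h2
    obtain h | h | h : b = a ∨ b = a + 1 ∨ a = b + 1 := by omega
    · exact Or.inl (by rw [h])
    · subst h
      exact Or.inr (hp _ (by omega))
    · subst h
      exact Or.inr (hp _ (by omega)).symm
  by_cases hnear : guardPos G p L d rob i n = rob n ∨ G.Adj (guardPos G p L d rob i n) (rob n)
  · rw [guardPos, if_pos hnear]
    exact hnear.imp_left Eq.symm
  · rw [guardPos, if_neg hnear]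
    cases n with
    | zero =>
      rw [guardPos]
      apply step _ _ (Nat.zero_le _) <;> simp only [pathTarget] <;> omega
    | succ n =>
      obtain h | h := guardPos_cases G p L d rob i n
      · exact absurd (by rw [h]; exact (hrob n).imp_left Eq.symm) hnear
      · rw [h]
        have := hd n
        apply step <;> simp only [pathTarget] <;> omega

theorem guardPos_captures {V : Type*} (G : SimpleGraph V) (p : ℕ → V) (L : ℕ) (d : V → ℕ)
    (rob : ℕ → V) (hrob : RobberLegal G rob)
    (hd : ∀ n, d (rob (n + 1)) ≤ d (rob n) + 1 ∧ d (rob n) ≤ d (rob (n + 1)) + 1)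
    (n : ℕ) (hn : L + 1 ≤ n) (j : ℕ) (hj : j ≤ L)
    (hjd : d (rob n) ≤ j + 1 ∧ j ≤ d (rob n) + 1)
    (hnear : rob n = p j ∨ G.Adj (p j) (rob n)) :
    ∃ i, guardPos G p L d rob i (n + 1) = rob n := by
  obtain ⟨m, rfl⟩ : ∃ m, n = m + 1 := ⟨n - 1, by omega⟩
  have := hd m
  -- this cop aims at index `j`
  refine ⟨⟨j + 2 - d (rob m), by omega⟩, guardPos_succ_of_near _ _ _ _ _ _ _ ?_⟩
  obtain h | h := guardPos_cases G p L d rob ⟨j + 2 - d (rob m), by omega⟩ m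
  · rw [h]
    exact hrob m
  · have ht : min (m + 1) (pathTarget L (d (rob m)) ⟨j + 2 - d (rob m), by omega⟩) = j := by
      simp only [pathTarget]
      omega
    rw [h, ht]
    exact hnear

/-- Distances from a fixed vertex differ by at most one along an edge. This includes vertices not
reachable from `a`, where both distances have the junk value `0`. -/
theorem dist_le_dist_add_one_of_adj {W : Type*} (H : SimpleGraph W) (a x y : W) (h : H.Adj x y) :
    H.dist a y ≤ H.dist a x + 1 := by
  by_cases hx : H.Reachable a x
  · obtain ⟨w, hw⟩ := hx.exists_walk_length_eq_dist
    rw [← hw]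
    simpa using SimpleGraph.dist_le (w.concat h)
  · have hy : ¬ H.Reachable a y := fun hy => hx (hy.trans h.symm.reachable)
    simp [SimpleGraph.dist_eq_zero_of_not_reachable hy]

theorem exists_walk_of_adj_succ {W : Type*} (H : SimpleGraph W) (q : ℕ → W) (L : ℕ)
    (hq : ∀ j < L, H.Adj (q j) (q (j + 1))) (a k : ℕ) (h : a + k ≤ L) :
    ∃ w : H.Walk (q a) (q (a + k)), w.length = k := by
  induction k with
  | zero => exact ⟨SimpleGraph.Walk.nil, rfl⟩
  | succ k ih =>
    obtain ⟨w, hw⟩ := ih (by omega)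
    exact ⟨w.concat (hq (a + k) (by omega)), by simp [hw]⟩

/-- Along a shortest path, the `j`-th vertex is at distance `j` from the start. -/
theorem dist_eq_of_shortest {W : Type*} (H : SimpleGraph W) (q : ℕ → W) (L : ℕ)
    (hq : ∀ j < L, H.Adj (q j) (q (j + 1))) (hL : L = H.dist (q 0) (q L)) (j : ℕ) (hj : j ≤ L) :
    H.dist (q 0) (q j) = j := by
  obtain ⟨w₁, h₁⟩ := exists_walk_of_adj_succ H q L hq 0 j (by omega)
  obtain ⟨w₂, h₂⟩ := exists_walk_of_adj_succ H q L hq j (L - j) (by omega)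
  have hjL : j + (L - j) = L := by omega
  have hle : H.dist (q 0) (q j) ≤ j := by
    simpa [h₁] using SimpleGraph.dist_le w₁
  have hreach : H.Reachable (q 0) (q j) := by
    simpa using w₁.reachable
  obtain ⟨w, hw⟩ := hreach.exists_walk_length_eq_dist
  have htot := SimpleGraph.dist_le (w.append w₂)
  rw [SimpleGraph.Walk.length_append, hw, h₂, hjL, ← hL] at htot
  omega

/-- Five cops can guard the closed neighbourhood `N[P]` of a path `P` that is shortest
relative to `D` (i.e. shortest in the induced subgraph `G[V(P) ∪ D]`), provided the
robber is confined to `D`: there is a strategy for five cops such that in every play in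
which the robber stays inside `D` there is a time `T` after which, whenever the robber
stands on a vertex of `N[P]`, some cop captures him on his next move. -/
theorem five_cops_guard_closed_neighbourhood_of_relative_shortest_path
    (V : Type) [Fintype V] (G : SimpleGraph V) (hconn : G.Connected)
    (D : Set V) (u v : V) (P : G.Walk u v) (hP : P.IsPath)
    (hshort : P.length =
      (G.induce ({x | x ∈ P.support} ∪ D)).dist
        ⟨u, Or.inl P.start_mem_support⟩ ⟨v, Or.inl P.end_mem_support⟩) :
    ∃ (init : Fin 5 → V) (F : List V → Fin 5 → V),
      ∀ rob : ℕ → V, RobberLegal G rob → (∀ n, rob n ∈ D) →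
        CopsLegal G (copSeq init F rob) ∧
        ∃ T : ℕ, ∀ n, T ≤ n →
          (∃ p ∈ P.support, rob n = p ∨ G.Adj p (rob n)) →
          ∃ i, copSeq init F rob (n + 1) i = rob n := by
  classical
  set S : Set V := {x | x ∈ P.support} ∪ D with hS
  set H := G.induce S with hH
  let q : ℕ → S := fun j => ⟨P.getVert j, Or.inl (P.getVert_mem_support j)⟩
  have hq : ∀ j < P.length, H.Adj (q j) (q (j + 1)) := fun j hj => P.adj_getVert_succ hj
  have hq0 : q 0 = ⟨u, Or.inl P.start_mem_support⟩ := Subtype.ext P.getVert_zero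
  have hqL : q P.length = ⟨v, Or.inl P.end_mem_support⟩ := Subtype.ext P.getVert_length
  have hdist := dist_eq_of_shortest H q P.length hq (by rw [hq0, hqL]; exact hshort)
  -- the value outside `S` is irrelevant, as the robber stays in `D`
  let d : V → ℕ := fun x => if h : x ∈ S then H.dist (q 0) ⟨x, h⟩ else 0
  have hdadj : ∀ x y, x ∈ S → y ∈ S → (y = x ∨ G.Adj x y) → d y ≤ d x + 1 := by
    intro x y hx hy h
    obtain rfl | h := h
    · omega
    · simp only [d, hx, hy, dif_pos]
      exact dist_le_dist_add_one_of_adj H _ _ _ h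
  have hdq : ∀ j ≤ P.length, d (P.getVert j) = j := by
    intro j hj
    have hm : P.getVert j ∈ S := (q j).2
    simp only [d, hm, dif_pos]
    exact hdist j hj
  refine ⟨fun _ => P.getVert 0, guardStrategy G P.getVert P.length d, fun rob hrob hD => ?_⟩
  have hmem : ∀ n, rob n ∈ S := fun n => Or.inr (hD n)
  have hd : ∀ n, d (rob (n + 1)) ≤ d (rob n) + 1 ∧ d (rob n) ≤ d (rob (n + 1)) + 1 := fun n =>
    ⟨hdadj _ _ (hmem _) (hmem _) (hrob n),
      hdadj _ _ (hmem _) (hmem _) ((hrob n).imp Eq.symm SimpleGraph.Adj.symm)⟩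
  refine ⟨fun n i => ?_, P.length + 1, fun n hn hN => ?_⟩
  · rw [copSeq_guardStrategy, copSeq_guardStrategy]
    exact guardPos_legal G P.getVert P.length d (fun j hj => P.adj_getVert_succ hj) rob hrob hd i n
  · obtain ⟨x, hx, hnear⟩ := hN
    obtain ⟨j, rfl, hj⟩ := SimpleGraph.Walk.mem_support_iff_exists_getVert.mp hx
    have hjS : P.getVert j ∈ S := (q j).2
    have h₁ := hdadj _ _ hjS (hmem n) hnear
    have h₂ := hdadj _ _ (hmem n) hjS (hnear.imp Eq.symm SimpleGraph.Adj.symm)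
    rw [hdq j hj] at h₁ h₂
    simp only [copSeq_guardStrategy]
    exact guardPos_captures G P.getVert P.length d rob hrob hd n hn j hj ⟨h₁, h₂⟩ hnear
end

section
/- For every natural number k there exists a finite connected graph G with cop number cn(G) > k such that G is isomorphic to the intersection graph of a finite family of two-element subsets of ℝ. Hence the maximum cop number of intersection graphs of two-element subsets of a line (and of the classes of line graphs, 2-interval graphs, and 2-unit-interval graphs, which contain them) is unbounded. -/
/-! ### Generalities on the game -/

/-- With one cop on every vertex the cops win at once, so the cop number of a finite graph is not
the junk value `sInf ∅`. -/
theorem copWin_card {n : ℕ} (G : SimpleGraph (Fin n)) : CopWin G n := by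
  refine ⟨id, fun _ => id, fun rob _ => ⟨?_, 0, rob 0, Or.inl rfl⟩⟩
  intro m i
  left
  cases m <;> rfl

theorem CopWin.of_iso {V W : Type*} {G : SimpleGraph V} {G' : SimpleGraph W} (φ : G ≃g G')
    {k : ℕ} (h : CopWin G k) : CopWin G' k := by
  obtain ⟨init, F, h⟩ := h
  refine ⟨fun i => φ (init i), fun l i => φ (F (l.map φ.symm) i), fun rob hrob => ?_⟩
  have key : ∀ n i, copSeq (fun i => φ (init i)) (fun l i => φ (F (l.map φ.symm) i)) rob n i
      = φ (copSeq init F (fun n => φ.symm (rob n)) n i) := by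
    intro n i
    cases n with
    | zero => rfl
    | succ n => simp [copSeq, Function.comp_def]
  have hl : RobberLegal G (fun n => φ.symm (rob n)) := by
    intro n
    rcases hrob n with h | h
    · left; simp [h]
    · right; exact φ.symm.map_rel_iff.2 h
  obtain ⟨h1, n, i, h2⟩ := h _ hl
  refine ⟨fun n i => ?_, n, i, ?_⟩
  · rw [key, key]
    rcases h1 n i with h | h
    · left; rw [h]
    · right; exact φ.map_rel_iff.2 h
  · rw [key, key]
    rcases h2 with h | h
    · left; rw [h]; simp
    · right; rw [h]; simp

/-! ### The robber's strategy on a line graph -/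

section Robber

variable {W : Type*} {H : SimpleGraph W}

/-- The oriented edge `d` is safe against cops standing on the edges `C i` if no endpoint of a
cop's edge lies in the closed neighbourhood of the head of `d`. -/
def SafeDart {m : ℕ} (C : Fin m → H.edgeSet) (d : H.Dart) : Prop :=
  ∀ i, ∀ w ∈ (C i : Sym2 W), w ≠ d.snd ∧ ¬ H.Adj d.snd w

/-- The vertex of the line graph underlying an oriented edge. -/
def dartVertex (d : H.Dart) : H.edgeSet := ⟨d.edge, d.edge_mem⟩

/-- If no cop's edge contains `y`, some edge out of `y` is safe. -/
theorem exists_safe [Fintype W] [DecidableRel H.Adj] {k m : ℕ} (hm : m ≤ k)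
    (hC4 : ∀ u v x y, u ≠ v → H.Adj u x → H.Adj v x → H.Adj u y → H.Adj v y → x = y)
    (hdeg : ∀ y, 4 * k < H.degree y) (C : Fin m → H.edgeSet) (y : W)
    (hy : ∀ i, y ∉ (C i : Sym2 W)) :
    ∃ d : H.Dart, d.fst = y ∧ SafeDart C d := by
  classical
  let E : Finset W := Finset.univ.biUnion fun i => (C i : Sym2 W).toFinset
  have hEmem : ∀ w, w ∈ E ↔ ∃ i, w ∈ (C i : Sym2 W) := by intro w; simp [E]
  have hE : E.card ≤ 2 * m := by
    calc E.card ≤ ∑ i : Fin m, (C i : Sym2 W).toFinset.card := Finset.card_biUnion_le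
      _ ≤ ∑ _i : Fin m, 2 := Finset.sum_le_sum fun i _ => by
          rw [Sym2.card_toFinset]; split_ifs <;> omega
      _ = 2 * m := by simp [mul_comm]
  let B : Finset W := E.biUnion fun w => {z ∈ H.neighborFinset y | H.Adj z w}
  have hB : B.card ≤ 2 * m := by
    calc B.card ≤ ∑ w ∈ E, ({z ∈ H.neighborFinset y | H.Adj z w}).card :=
          Finset.card_biUnion_le
      _ ≤ ∑ _w ∈ E, 1 := Finset.sum_le_sum fun w hw => by
          obtain ⟨i, hi⟩ := (hEmem w).1 hw
          have hne : y ≠ w := by rintro rfl; exact hy i hi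
          rw [Finset.card_le_one]
          intro a ha b hb
          simp only [Finset.mem_filter, SimpleGraph.mem_neighborFinset] at ha hb
          exact hC4 y w a b hne ha.1 ha.2.symm hb.1 hb.2.symm
      _ ≤ 2 * m := by simpa using hE
  have hlt : (E ∪ B).card < (H.neighborFinset y).card := by
    have h1 := Finset.card_union_le E B
    have h2 := hdeg y
    rw [SimpleGraph.card_neighborFinset_eq_degree]
    omega
  obtain ⟨z, hz, hz'⟩ := Finset.exists_mem_notMem_of_card_lt_card hlt
  rw [SimpleGraph.mem_neighborFinset] at hz
  refine ⟨⟨(y, z), hz⟩, rfl, fun i w hw => ⟨?_, ?_⟩⟩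
  · rintro rfl
    exact hz' (Finset.mem_union_left _ ((hEmem _).2 ⟨i, hw⟩))
  · intro hadj
    refine hz' (Finset.mem_union_right _ (Finset.mem_biUnion.2 ⟨w, (hEmem _).2 ⟨i, hw⟩, ?_⟩))
    simpa using ⟨hz, hadj⟩

/-- Against a safe oriented edge no single cops' move reaches the head. -/
theorem SafeDart.notMem_of_move {m : ℕ} {C C' : Fin m → H.edgeSet} {d : H.Dart}
    (hd : SafeDart C d) (hC : ∀ i, C' i = C i ∨ H.lineGraph.Adj (C i) (C' i)) (i : Fin m) :
    d.snd ∉ (C' i : Sym2 W) := by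
  intro hmem
  rcases hC i with h | h
  · rw [h] at hmem
    exact (hd i _ hmem).1 rfl
  · rw [SimpleGraph.lineGraph_adj_iff_exists] at h
    obtain ⟨-, u, hu, hu'⟩ := h
    obtain ⟨h1, h2⟩ := hd i u hu
    have : (C' i : Sym2 W) = s(d.snd, u) := (Sym2.mem_and_mem_iff h1.symm).1 ⟨hmem, hu'⟩
    have hE := (C' i).2
    rw [this, SimpleGraph.mem_edgeSet] at hE
    exact h2 hE

open Classical in
/-- The robber's reply: a safe edge out of the head of `d`, or staying put if there is none. -/
noncomputable def nextDart {m : ℕ} (C : Fin m → H.edgeSet) (d : H.Dart) : H.Dart :=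
  if h : ∃ d' : H.Dart, d'.fst = d.snd ∧ SafeDart C d' then h.choose else d

/-- The play against the cop strategy `F`: the robber's past positions, and the oriented edge on
which the robber currently stands. -/
noncomputable def robberPlay {m : ℕ} (F : List H.edgeSet → Fin m → H.edgeSet) (d₀ : H.Dart) :
    ℕ → List H.edgeSet × H.Dart
  | 0 => ([], d₀)
  | n + 1 =>
    let s := robberPlay F d₀ n
    (s.1 ++ [dartVertex s.2], nextDart (F (s.1 ++ [dartVertex s.2])) s.2)

/-- The recorded history is the list of past robber positions, so `robberPlay` answers exactly the
cop positions computed by `copSeq`. -/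
theorem robberPlay_fst {m : ℕ} (F : List H.edgeSet → Fin m → H.edgeSet) (d₀ : H.Dart) (n : ℕ) :
    (robberPlay F d₀ n).1 = (List.range n).map fun j => dartVertex (robberPlay F d₀ j).2 := by
  induction n with
  | zero => rfl
  | succ n ih => rw [List.range_succ, List.map_append, ← ih]; rfl

/-- On the line graph of a `C₄`-free graph with all degrees above `4k`, the robber evades `k`
cops. -/
theorem not_copWin_lineGraph [Fintype W] [Nonempty W] [DecidableRel H.Adj] {k m : ℕ} (hm : m ≤ k)
    (hC4 : ∀ u v x y, u ≠ v → H.Adj u x → H.Adj v x → H.Adj u y → H.Adj v y → x = y)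
    (hdeg : ∀ y, 4 * k < H.degree y) : ¬ CopWin H.lineGraph m := by
  classical
  rintro ⟨init, F, hwin⟩
  -- The cops' initial edges cover at most `2k` vertices, and there are more than `4k`.
  obtain ⟨y₀, hy₀⟩ : ∃ y, ∀ i, y ∉ (init i : Sym2 W) := by
    by_contra! hcov
    have h1 : (Finset.univ : Finset W) ⊆
        Finset.univ.biUnion fun i => (init i : Sym2 W).toFinset := by
      intro y _
      simpa using hcov y
    have h2 := (Finset.card_le_card h1).trans Finset.card_biUnion_le
    have h3 : ∑ i : Fin m, (init i : Sym2 W).toFinset.card ≤ ∑ _i : Fin m, 2 :=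
      Finset.sum_le_sum fun i _ => by rw [Sym2.card_toFinset]; split_ifs <;> omega
    have h4 := H.degree_lt_card_verts (Classical.arbitrary W)
    have h5 := hdeg (Classical.arbitrary W)
    simp only [Finset.card_univ, Finset.sum_const, Fintype.card_fin, smul_eq_mul] at h2 h3
    omega
  obtain ⟨d₀, -, hd₀⟩ := exists_safe hm hC4 hdeg init y₀ hy₀
  let d : ℕ → H.Dart := fun n => (robberPlay F d₀ n).2
  let rob : ℕ → H.edgeSet := fun n => dartVertex (d n)
  have hnext : ∀ n, d (n + 1) = nextDart (copSeq init F rob (n + 1)) (d n) := by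
    intro n
    have h := robberPlay_fst F d₀ (n + 1)
    change nextDart (F (robberPlay F d₀ (n + 1)).1) (d n) = _
    rw [h]
    rfl
  have hlegal : RobberLegal H.lineGraph rob := by
    intro n
    rw [or_iff_not_imp_left]
    intro hne
    rw [SimpleGraph.lineGraph_adj_iff_exists]
    refine ⟨fun h => hne h.symm, (d n).snd, Sym2.mem_mk_right _ _, ?_⟩
    change (d n).snd ∈ (d (n + 1)).edge
    rw [hnext, nextDart]
    split_ifs with h
    · have hmem : h.choose.fst ∈ h.choose.edge := Sym2.mem_mk_left _ _
      rwa [h.choose_spec.1] at hmem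
    · exact Sym2.mem_mk_right _ _
  obtain ⟨hcops, n, i, hcap⟩ := hwin rob hlegal
  have hsafe : ∀ n, SafeDart (copSeq init F rob n) (d n) := by
    intro n
    induction n with
    | zero => exact hd₀
    | succ n ih =>
      have h := exists_safe hm hC4 hdeg _ _ (ih.notMem_of_move (hcops n))
      rw [hnext, nextDart, dif_pos h]
      exact h.choose_spec.2
  have hmem : (d n).snd ∈ (rob n : Sym2 W) := Sym2.mem_mk_right _ _
  rcases hcap with h | h
  · exact (hsafe n i _ (h ▸ hmem)).1 rfl
  · exact (hsafe n).notMem_of_move (hcops n) i (h ▸ hmem)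

/-- A walk in `H` yields a walk in the line graph, since edges sharing an endpoint are equal or
adjacent there. -/
theorem lineGraph_connected (hH : H.Connected) [Nonempty H.edgeSet] : H.lineGraph.Connected := by
  have hshare : ∀ (u : W) (e f : H.edgeSet), u ∈ (e : Sym2 W) → u ∈ (f : Sym2 W) →
      H.lineGraph.Reachable e f := by
    intro u e f he hf
    by_cases hef : e = f
    · rw [hef]
    · exact SimpleGraph.Adj.reachable (SimpleGraph.lineGraph_adj_iff_exists.2 ⟨hef, u, he, hf⟩)
  have hwalk : ∀ {u v : W} (_ : H.Walk u v) (e f : H.edgeSet), u ∈ (e : Sym2 W) →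
      v ∈ (f : Sym2 W) → H.lineGraph.Reachable e f := by
    intro u v p
    induction p with
    | nil => exact hshare _
    | cons h _ ih =>
      intro e f he hf
      exact (hshare _ e ⟨s(_, _), h⟩ he (Sym2.mem_mk_left _ _)).trans
        (ih ⟨s(_, _), h⟩ f (Sym2.mem_mk_right _ _) hf)
  refine ⟨fun e f => ?_⟩
  obtain ⟨p⟩ := hH.preconnected (e : Sym2 W).out.1 (f : Sym2 W).out.1
  exact hwalk p e f (Sym2.out_fst_mem _) (Sym2.out_fst_mem _)

end Robber

/-! ### A `C₄`-free graph of large minimum degree -/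

/-- The affine polarity graph over `F`: distinct `(a, b)` and `(c, d)` are adjacent when
`b + d = a c`. -/
def polarityGraph (F : Type*) [Field F] : SimpleGraph (F × F) where
  Adj u v := u ≠ v ∧ u.2 + v.2 = u.1 * v.1
  symm := ⟨fun u v h => ⟨h.1.symm, by rw [add_comm, h.2, mul_comm]⟩⟩
  loopless := ⟨fun _ h => h.1 rfl⟩

section Polarity

variable {F : Type*} [Field F]

/-- Subtracting the equations at two distinct points leaves a nonzero multiple of the first
coordinate of a common neighbour. -/
theorem polarityGraph_C4_free (u v x y : F × F) (huv : u ≠ v)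
    (h1 : (polarityGraph F).Adj u x) (h2 : (polarityGraph F).Adj v x)
    (h3 : (polarityGraph F).Adj u y) (h4 : (polarityGraph F).Adj v y) : x = y := by
  obtain ⟨-, h1⟩ := h1
  obtain ⟨-, h2⟩ := h2
  obtain ⟨-, h3⟩ := h3
  obtain ⟨-, h4⟩ := h4
  have hne : u.1 - v.1 ≠ 0 := by
    intro h
    have h' := sub_eq_zero.1 h
    refine huv (Prod.ext h' ?_)
    rw [h', ← h2] at h1
    exact add_right_cancel h1
  have hx : x.1 = y.1 := by
    apply mul_left_cancel₀ hne
    linear_combination h2 - h1 + h3 - h4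
  refine Prod.ext hx ?_
  have h5 : u.2 + x.2 = u.2 + y.2 := by rw [h1, h3, hx]
  exact add_left_cancel h5

theorem polarityGraph_connected : (polarityGraph F).Connected := by
  have hstep : ∀ u v : F × F, u.2 + v.2 = u.1 * v.1 → (polarityGraph F).Reachable u v := by
    intro u v h
    by_cases huv : u = v
    · rw [huv]
    · exact SimpleGraph.Adj.reachable (G := polarityGraph F) ⟨huv, h⟩
  -- Points with distinct first coordinates satisfy the equation with a common third point.
  have hne : ∀ u v : F × F, u.1 ≠ v.1 → (polarityGraph F).Reachable u v := by
    intro u v h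
    have h' : u.1 - v.1 ≠ 0 := sub_ne_zero.2 h
    set c := (u.2 - v.2) / (u.1 - v.1)
    have hc' : c * (u.1 - v.1) = u.2 - v.2 := div_mul_cancel₀ _ h'
    refine (hstep u (c, u.1 * c - u.2) (by ring)).trans (hstep v (c, u.1 * c - u.2) ?_).symm
    linear_combination hc'
  refine ⟨fun u v => ?_⟩
  by_cases h : u.1 = v.1
  · refine (hne u (u.1 + 1, 0) ?_).trans (hne _ v ?_)
    · simp
    · simp [h]
  · exact hne u v h

/-- For each `c ≠ a` the point `(c, a c - b)` is a neighbour of `(a, b)`; the value `c = a` is left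
out because `(a, a² - b)` may be `(a, b)` itself. -/
theorem polarityGraph_degree [Fintype F] [DecidableRel (polarityGraph F).Adj] (u : F × F) :
    Fintype.card F - 1 ≤ (polarityGraph F).degree u := by
  classical
  rw [← SimpleGraph.card_neighborFinset_eq_degree, ← Finset.card_univ,
    ← Finset.card_erase_of_mem (Finset.mem_univ u.1)]
  apply Finset.card_le_card_of_injOn (fun c => (c, u.1 * c - u.2))
  · intro c hc
    rw [Finset.mem_coe, Finset.mem_erase] at hc
    rw [Finset.mem_coe, SimpleGraph.mem_neighborFinset]
    exact ⟨fun h => hc.1 (congrArg Prod.fst h).symm, by ring⟩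
  · intro a _ b _ h
    exact congrArg Prod.fst h

end Polarity

/-! ### Embedding in the reals -/

/-- For every `k` there is a finite connected graph with cop number greater than `k`
which is an intersection graph of two-element subsets of the real line; hence the
maximum cop number of such intersection graphs (and of line graphs, 2-interval graphs
and 2-unit-interval graphs) is unbounded. -/
theorem copNumber_unbounded_pairs_of_reals (k : ℕ) :
    ∃ (n : ℕ) (G : SimpleGraph (Fin n)), G.Connected ∧ k < copNumber G ∧
      ∃ S : Fin n → Set ℝ,
        (∀ v, ∃ x y : ℝ, x ≠ y ∧ S v = {x, y}) ∧
        ∀ u v, G.Adj u v ↔ u ≠ v ∧ (S u ∩ S v).Nonempty := by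
  classical
  obtain ⟨p, hp, hprime⟩ := Nat.exists_infinite_primes (4 * k + 2)
  have : Fact p.Prime := ⟨hprime⟩
  let H := polarityGraph (ZMod p)
  have hdeg : ∀ y, 4 * k < H.degree y := by
    intro y
    have h := polarityGraph_degree y
    rw [ZMod.card] at h
    change p - 1 ≤ H.degree y at h
    omega
  have : Nonempty H.edgeSet := by
    obtain ⟨z, hz⟩ := (H.degree_pos_iff_exists_adj 0).1 (by have := hdeg 0; omega)
    exact ⟨⟨s(0, z), hz⟩⟩
  let φ : Fin (Fintype.card H.edgeSet) ≃ H.edgeSet := (Fintype.equivFin _).symm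
  let G : SimpleGraph (Fin (Fintype.card H.edgeSet)) := H.lineGraph.comap φ
  let Φ : G ≃g H.lineGraph := SimpleGraph.Iso.comap φ _
  obtain ⟨ι, hι⟩ : ∃ ι : ZMod p × ZMod p → ℝ, Function.Injective ι := by
    obtain ⟨f, hf⟩ := Countable.exists_injective_nat (ZMod p × ZMod p)
    exact ⟨fun w => f w, Nat.cast_injective.comp hf⟩
  refine ⟨_, G, Φ.connected_iff.2 (lineGraph_connected polarityGraph_connected), ?_,
    fun v => ι '' {w | w ∈ (φ v : Sym2 _)}, fun v => ?_, fun u v => ?_⟩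
  · by_contra! hle
    have hwin : CopWin G (copNumber G) :=
      Nat.sInf_mem (s := {k | CopWin G k}) ⟨_, copWin_card G⟩
    exact not_copWin_lineGraph hle polarityGraph_C4_free hdeg (hwin.of_iso Φ)
  · obtain ⟨⟨a, b⟩, hab⟩ : ∃ q : (ZMod p × ZMod p) × (ZMod p × ZMod p),
        s(q.1, q.2) = (φ v : Sym2 _) := ⟨_, Quot.out_eq _⟩
    have hadj : H.Adj a b := by
      have h := (φ v).2
      rw [← hab] at h
      exact h
    refine ⟨ι a, ι b, fun h => hadj.ne (hι h), ?_⟩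
    have hset : {w | w ∈ (φ v : Sym2 _)} = {a, b} := by
      ext w
      rw [← hab]
      simp
    change ι '' {w | w ∈ (φ v : Sym2 _)} = _
    rw [hset, Set.image_pair]
  · change H.lineGraph.Adj (φ u) (φ v) ↔ _
    rw [SimpleGraph.lineGraph_adj_iff_exists, ← Set.image_inter hι, Set.image_nonempty,
      φ.injective.ne_iff]
    rfl
end

section
/- For every natural number k there exists a finite connected graph G with cop number cn(G) > k such that G is isomorphic to the intersection graph of a finite family of closed Euclidean unit balls in ℝ³. Hence the maximum cop number of intersection graphs of 3-dimensional unit balls is unbounded. -/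
/-! ### Escaping from cops by means of a safe set of positions -/

/-- `Q r C` describes the positions (robber at `r`, cops at `C`, robber to move) that are safe for
the robber. If the robber can reach such a position at the start, and can always move so that the
position after the cops' answer is again safe, then `k` cops do not win. -/
theorem not_copWin_of_safe {V : Type*} (G : SimpleGraph V) (k : ℕ) (Q : V → (Fin k → V) → Prop)
    (hstart : ∀ C : Fin k → V, ∃ r, (∀ i, C i ≠ r) ∧
      ∀ C' : Fin k → V, (∀ i, C' i = C i ∨ G.Adj (C i) (C' i)) → (∀ i, C' i ≠ r) ∧ Q r C')
    (hstep : ∀ r C, Q r C → ∃ r', (r' = r ∨ G.Adj r r') ∧ (∀ i, C i ≠ r') ∧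
      ∀ C' : Fin k → V, (∀ i, C' i = C i ∨ G.Adj (C i) (C' i)) → (∀ i, C' i ≠ r') ∧ Q r' C') :
    ¬ CopWin G k := by
  classical
  rintro ⟨init, F, hF⟩
  obtain ⟨r0, hr0, hr0'⟩ := hstart init
  have hmove : ∀ r C, ∃ r', (r' = r ∨ G.Adj r r') ∧ (Q r C → (∀ i, C i ≠ r') ∧
      ∀ C' : Fin k → V, (∀ i, C' i = C i ∨ G.Adj (C i) (C' i)) →
        (∀ i, C' i ≠ r') ∧ Q r' C') := by
    intro r C
    by_cases h : Q r C
    · obtain ⟨r', h1, h2⟩ := hstep r C h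
      exact ⟨r', h1, fun _ => h2⟩
    · exact ⟨r, Or.inl rfl, fun h' => absurd h' h⟩
  choose mv hmv1 hmv2 using hmove
  -- the state is the robber's current vertex together with the history that the cops see
  let st : ℕ → V × List V := fun n => Nat.rec (r0, [r0])
    (fun _ s => (mv s.1 (F s.2), s.2 ++ [mv s.1 (F s.2)])) n
  let rob : ℕ → V := fun n => (st n).1
  have hhist : ∀ n, (List.range (n + 1)).map rob = (st n).2 := by
    intro n
    induction n with
    | zero => rfl
    | succ n ih =>
      rw [List.range_succ, List.map_append, ih]
      rfl
  have hrob : ∀ n, rob (n + 1) = mv (rob n) (copSeq init F rob (n + 1)) := by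
    intro n
    change mv (st n).1 (F (st n).2) = _
    rw [← hhist n]
    rfl
  have hlegal : RobberLegal G rob := by
    intro n
    rw [hrob]
    exact hmv1 _ _
  obtain ⟨hcl, n, i, hcap⟩ := hF rob hlegal
  have key : ∀ n, (∀ i, copSeq init F rob n i ≠ rob n) ∧
      (∀ i, copSeq init F rob (n + 1) i ≠ rob n) ∧ Q (rob n) (copSeq init F rob (n + 1)) := by
    intro n
    induction n with
    | zero => exact ⟨hr0, hr0' _ (hcl 0)⟩
    | succ n ih =>
      have h := hmv2 _ _ ih.2.2
      rw [← hrob n] at h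
      exact ⟨h.1, h.2 _ (hcl (n + 1))⟩
  rcases hcap with hcap | hcap
  · exact (key n).1 i hcap
  · exact (key n).2.1 i hcap

/-! ### The scaffold: horizontal rods joined by long vertical pillars -/

/-- The lattice points of the scaffold. `E y x` says that there is a pillar over `(x, y)`.
There is a bottom rod `{(x, y, 0)}` for each `y`, and a top rod `{(x, y, h)}` for each `x`, that
carries a pillar; the pillar over `(x, y)` joins the bottom rod `y` to the top rod `x`. -/
def Scaffold (E : ℤ → ℤ → Prop) (M h x y z : ℤ) : Prop :=
  (z = 0 ∧ 0 ≤ x ∧ x ≤ M ∧ ∃ x', E y x') ∨ (z = h ∧ 0 ≤ y ∧ y ≤ M ∧ ∃ y', E y' x) ∨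
    (0 < z ∧ z < h ∧ E y x)

/-- The requirements on the incidence relation `E` between bottom and top rods: symmetry, even
coordinates in `[0, M]`, no 4-cycle, more than `k + 1` pillars on each rod, more than `k` rods,
and any two bottom rods having a bottom rod that shares a top rod with both. -/
structure Incidence (E : ℤ → ℤ → Prop) (M : ℤ) (k : ℕ) : Prop where
  symm : ∀ {y x}, E y x → E x y
  even : ∀ {y x}, E y x → x % 2 = 0
  range : ∀ {y x}, E y x → 0 ≤ x ∧ x ≤ M
  c4 : ∀ {y y' x x'}, E y x → E y x' → E y' x → E y' x' → y = y' ∨ x = x'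
  deg : ∀ {y x}, E y x → ∀ S : Finset ℤ, S.card ≤ k + 1 → ∃ x', E y x' ∧ x' ∉ S
  start : ∀ S : Finset ℤ, S.card ≤ k → ∃ y x, E y x ∧ y ∉ S
  conn : ∀ {y x y' x'}, E y x → E y' x' →
    ∃ x₁ y₁ x₂, E y x₁ ∧ E y₁ x₁ ∧ E y₁ x₂ ∧ E y' x₂

/-- `X, Y, Z` are coordinates identifying the vertices of `G` with the points of the scaffold, in
such a way that adjacency means distance at most one. -/
structure Layout {V : Type*} (G : SimpleGraph V) (E : ℤ → ℤ → Prop) (M h : ℤ) (X Y Z : V → ℤ) :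
    Prop where
  mem : ∀ v, Scaffold E M h (X v) (Y v) (Z v)
  surj : ∀ {x y z}, Scaffold E M h x y z → ∃ v, X v = x ∧ Y v = y ∧ Z v = z
  inj : ∀ {u v}, X u = X v → Y u = Y v → Z u = Z v → u = v
  adj : ∀ u v, G.Adj u v ↔ u ≠ v ∧ (X u - X v) ^ 2 + (Y u - Y v) ^ 2 + (Z u - Z v) ^ 2 ≤ 1

theorem Scaffold.flip {E : ℤ → ℤ → Prop} {M h x y z : ℤ} {k : ℕ} (hE : Incidence E M k)
    (hA : Scaffold E M h x y z) : Scaffold E M h y x (h - z) := by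
  rcases hA with ⟨h1, h2, h3, x', h4⟩ | ⟨h1, h2, h3, y', h4⟩ | ⟨h1, h2, h3⟩
  · exact Or.inr (Or.inl ⟨by omega, h2, h3, x', hE.symm h4⟩)
  · exact Or.inl ⟨by omega, h2, h3, y', hE.symm h4⟩
  · exact Or.inr (Or.inr ⟨by omega, by omega, hE.symm h3⟩)

/-- Turning the scaffold upside down and swapping the horizontal axes exchanges top and bottom
rods, so every statement about bottom rods has a counterpart about top rods. -/
theorem Layout.flip {V : Type*} {G : SimpleGraph V} {E : ℤ → ℤ → Prop} {M h : ℤ} {k : ℕ}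
    {X Y Z : V → ℤ} (hE : Incidence E M k) (L : Layout G E M h X Y Z) :
    Layout G E M h Y X (fun v => h - Z v) where
  mem v := (L.mem v).flip hE
  surj := by
    intro x y z hA
    obtain ⟨v, h1, h2, h3⟩ := L.surj (hA.flip hE)
    exact ⟨v, h2, h1, by omega⟩
  inj := by
    intro u v h1 h2 h3
    exact L.inj h2 h1 (by omega)
  adj u v := by
    rw [L.adj]
    have : (X u - X v) ^ 2 + (Y u - Y v) ^ 2 + (Z u - Z v) ^ 2 =
      (Y u - Y v) ^ 2 + (X u - X v) ^ 2 + (h - Z u - (h - Z v)) ^ 2 := by ring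
    rw [this]

theorem lattice_step {a b c : ℤ} (h : a ^ 2 + b ^ 2 + c ^ 2 ≤ 1) :
    (b = 0 ∧ c = 0 ∧ -1 ≤ a ∧ a ≤ 1) ∨ (a = 0 ∧ c = 0 ∧ -1 ≤ b ∧ b ≤ 1) ∨
      (a = 0 ∧ b = 0 ∧ -1 ≤ c ∧ c ≤ 1) := by
  have ha : -1 ≤ a ∧ a ≤ 1 := by constructor <;> nlinarith [sq_nonneg b, sq_nonneg c]
  have hb : -1 ≤ b ∧ b ≤ 1 := by constructor <;> nlinarith [sq_nonneg a, sq_nonneg c]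
  have hc : -1 ≤ c ∧ c ≤ 1 := by constructor <;> nlinarith [sq_nonneg b, sq_nonneg a]
  obtain ⟨ha1, ha2⟩ := ha
  obtain ⟨hb1, hb2⟩ := hb
  obtain ⟨hc1, hc2⟩ := hc
  interval_cases a <;> interval_cases b <;> interval_cases c <;> simp_all

/-- A move changes one coordinate only; `x` changes only on bottom rods and `y` only on
top rods, since pillars and rods have even coordinates. -/
theorem Scaffold.step {E : ℤ → ℤ → Prop} {M h x y z x' y' z' : ℤ} {k : ℕ} (hE : Incidence E M k)
    (hh : 1 < h) (hA : Scaffold E M h x y z) (hA' : Scaffold E M h x' y' z')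
    (hs : (x - x') ^ 2 + (y - y') ^ 2 + (z - z') ^ 2 ≤ 1) :
    (y = y' ∧ z = 0 ∧ z' = 0 ∧ x - x' ≤ 1 ∧ x' - x ≤ 1) ∨
    (x = x' ∧ z = h ∧ z' = h) ∨
    (x = x' ∧ y = y' ∧ z - z' = 1 ∧ E y x) ∨ (x = x' ∧ y = y' ∧ z' - z = 1 ∧ E y x) ∨
    (x = x' ∧ y = y' ∧ z = z') := by
  have hxe : z ≠ 0 → x % 2 = 0 := by
    rcases hA with h1 | ⟨h1, h2, h3, y', h4⟩ | ⟨h1, h2, h3⟩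
    · omega
    · exact fun _ => hE.even h4
    · exact fun _ => hE.even h3
  have hxe' : z' ≠ 0 → x' % 2 = 0 := by
    rcases hA' with h1 | ⟨h1, h2, h3, y', h4⟩ | ⟨h1, h2, h3⟩
    · omega
    · exact fun _ => hE.even h4
    · exact fun _ => hE.even h3
  have hye : z ≠ h → y % 2 = 0 := by
    rcases hA with ⟨h1, h2, h3, y', h4⟩ | h1 | ⟨h1, h2, h3⟩
    · exact fun _ => hE.even (hE.symm h4)
    · omega
    · exact fun _ => hE.even (hE.symm h3)
  have hye' : z' ≠ h → y' % 2 = 0 := by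
    rcases hA' with ⟨h1, h2, h3, y', h4⟩ | h1 | ⟨h1, h2, h3⟩
    · exact fun _ => hE.even (hE.symm h4)
    · omega
    · exact fun _ => hE.even (hE.symm h3)
  have hE' : z ≠ z' → x = x' → y = y' → E y x := by
    rintro hne rfl rfl
    rcases hA with h1 | h1 | ⟨h1, h2, h3⟩
    · rcases hA' with h1' | h1' | ⟨h1', h2', h3'⟩
      · omega
      · have := lattice_step hs
        omega
      · exact h3'
    · rcases hA' with h1' | h1' | ⟨h1', h2', h3'⟩
      · have := lattice_step hs
        omega
      · omega
      · exact h3'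
    · exact h3
  rcases lattice_step hs with h1 | h1 | h1
  · omega
  · omega
  · by_cases hz : z = z'
    · omega
    · have := hE' hz (by omega) (by omega)
      rcases (show z - z' = 1 ∨ z' - z = 1 by omega) with h2 | h2
      · exact Or.inr (Or.inr (Or.inl ⟨by omega, by omega, h2, this⟩))
      · exact Or.inr (Or.inr (Or.inr (Or.inl ⟨by omega, by omega, h2, this⟩)))

/-! ### The progress function of a run -/

open Classical in
/-- Progress of a run along the bottom rod `y` from the foot of the pillar over `x₀` to the foot of
the pillar over `x₁`, then up that pillar. It increases by one at each step of the run, and changes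
by at most one along every edge. Positions from which a cop could interfere with the run have
nonnegative progress. -/
noncomputable def progress (E : ℤ → ℤ → Prop) (M h y x₀ x₁ cx cy cz : ℤ) : ℤ :=
  if cz = h then (if cx = x₁ then |x₁ - x₀| + h else -1)
  else if cy = y then (if cx = x₁ then |x₁ - x₀| + cz else max (-1) (|cx - x₀| - cz))
  else if E cy x₁ then
    (if cx = x₁ then min (|x₁ - x₀| + h) (|x₁ - x₀| + M + cz)
      else max (-1) (|x₁ - x₀| + M - cz))
  else -1

/-- A cop at `(cx, cy, cz)` is harmless for a robber who has just arrived at the foot `(x₀, y, 0)`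
of a pillar: it is either far from the bottom rod `y`, or behind the robber on that pillar. -/
def Harmless (M y x₀ cx cy cz : ℤ) : Prop :=
  cy = y → (M < cz ∨ (cx = x₀ ∧ 0 < cz))

section run

variable {E : ℤ → ℤ → Prop} {M h : ℤ} {k : ℕ}

theorem abs_sub_le_of_range {a b : ℤ} (ha : 0 ≤ a ∧ a ≤ M) (hb : 0 ≤ b ∧ b ≤ M) :
    |a - b| ≤ M := by
  rw [abs_le]; omega

theorem Scaffold.range {x y z : ℤ} (hE : Incidence E M k) (hA : Scaffold E M h x y z) :
    0 ≤ x ∧ x ≤ M := by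
  rcases hA with ⟨h1, h2, h3, x', h4⟩ | ⟨h1, h2, h3, y', h4⟩ | ⟨h1, h2, h3⟩
  · exact ⟨h2, h3⟩
  · exact hE.range h4
  · exact hE.range h3

theorem progress_step (hE : Incidence E M k) (hh : 2 * M + 2 ≤ h) (hM : 0 ≤ M)
    {y x₀ x₁ x y₁ z x' y' z' : ℤ} (h0 : E y x₀) (h1 : E y x₁)
    (hA : Scaffold E M h x y₁ z) (hA' : Scaffold E M h x' y' z')
    (hs : (x - x') ^ 2 + (y₁ - y') ^ 2 + (z - z') ^ 2 ≤ 1) :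
    progress E M h y x₀ x₁ x' y' z' ≤ progress E M h y x₀ x₁ x y₁ z + 1 := by
  have a1 := abs_sub_le_of_range (hE.range h1) (hE.range h0)
  have a2 := abs_sub_le_of_range (hA.range hE) (hE.range h0)
  have a3 := abs_nonneg (x₁ - x₀)
  have a4 := abs_nonneg (x - x₀)
  rcases hA.step hE (by omega) hA' hs with
    ⟨rfl, rfl, rfl, h3, h4⟩ | ⟨rfl, rfl, rfl⟩ | ⟨rfl, rfl, h3, h4⟩ | ⟨rfl, rfl, h3, h4⟩ |
      ⟨rfl, rfl, rfl⟩
  · have a5 : |x' - x₀| ≤ |x - x₀| + 1 := by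
      have := abs_sub_abs_le_abs_sub (x' - x₀) (x - x₀)
      have h5 : |x' - x₀ - (x - x₀)| ≤ 1 := by rw [abs_le]; omega
      omega
    have a6 := abs_nonneg (x' - x₀)
    unfold progress
    split_ifs <;> first | omega | (subst_vars; omega)
  · unfold progress
    split_ifs <;> omega
  · have hz : 0 ≤ z' := by rcases hA' with h | h | h <;> omega
    unfold progress
    split_ifs <;> first | omega | (subst_vars; first | omega | contradiction)
  · have hz : 0 ≤ z := by rcases hA with h | h | h <;> omega
    unfold progress
    split_ifs <;> first | omega | (subst_vars; first | omega | contradiction)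
  · omega

/-- Which positions threaten the run to `x₁`. -/
theorem threat_cases (hE : Incidence E M k) {y x₀ x₁ cx cy cz : ℤ} (h0 : E y x₀)
    (hA : Scaffold E M h cx cy cz) (hc : Harmless M y x₀ cx cy cz)
    (ht : 0 ≤ progress E M h y x₀ x₁ cx cy cz) :
    (cz = h ∧ cx = x₁) ∨ (cz ≠ h ∧ cy = y ∧ cx = x₁) ∨ (cz ≠ h ∧ cy ≠ y ∧ E cy x₁) := by
  have a2 := abs_sub_le_of_range (hA.range hE) (hE.range h0)
  unfold progress at ht
  unfold Harmless at hc
  split_ifs at ht with c1 c2 c3 c4 c5 c6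
  · exact Or.inl ⟨c1, c2⟩
  · omega
  · exact Or.inr (Or.inl ⟨c1, c3, c4⟩)
  · rcases hc c3 with h3 | ⟨rfl, h3⟩
    · omega
    · simp at ht; omega
  · exact Or.inr (Or.inr ⟨c1, c3, c5⟩)
  · exact Or.inr (Or.inr ⟨c1, c3, c5⟩)
  · omega

/-- A harmless cop threatens at most one run, because there are no 4-cycles. -/
theorem threat_unique (hE : Incidence E M k) {y x₀ x₁ x₂ cx cy cz : ℤ} (h0 : E y x₀)
    (h1 : E y x₁) (h2 : E y x₂)
    (hA : Scaffold E M h cx cy cz) (hc : Harmless M y x₀ cx cy cz)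
    (ht1 : 0 ≤ progress E M h y x₀ x₁ cx cy cz)
    (ht2 : 0 ≤ progress E M h y x₀ x₂ cx cy cz) : x₁ = x₂ := by
  have c1 := threat_cases hE h0 hA hc ht1
  have c2 := threat_cases hE h0 hA hc ht2
  by_cases hz : cz = h
  · omega
  by_cases hy : cy = y
  · omega
  have e1 : E cy x₁ := by tauto
  have e2 : E cy x₂ := by tauto
  rcases hE.c4 h1 h2 e1 e2 with h | h
  · exact absurd h.symm hy
  · exact h

/-- When the run ends, a cop with less progress than the robber is harmless, seen from the top. -/
theorem harmless_of_progress_lt {y x₀ x₁ cx cy cz : ℤ} (hh : 2 * M + 2 ≤ h)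
    (hA : Scaffold E M h cx cy cz) (hc : progress E M h y x₀ x₁ cx cy cz < |x₁ - x₀| + h) :
    Harmless M x₁ y cy cx (h - cz) := by
  rintro rfl
  unfold progress at hc
  rcases hA with ⟨h1, h2, h3, x', h4⟩ | ⟨h1, h2, h3, y', h4⟩ | ⟨h1, h2, h3⟩
  · left; omega
  · simp [h1] at hc
  · by_cases hy : cy = y
    · right; omega
    · left
      simp only [hy, h3, if_true, if_false, h2.ne] at hc
      omega

/-- The vertices of the run, in coordinates. -/
def OnRun (h y x₀ x₁ rx ry rz : ℤ) : Prop :=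
  ry = y ∧ ((rz = 0 ∧ |rx - x₀| + |x₁ - rx| = |x₁ - x₀|) ∨ (rx = x₁ ∧ 0 ≤ rz ∧ rz ≤ h))

end run

section game

variable {V : Type*} {G : SimpleGraph V} {E : ℤ → ℤ → Prop} {M h : ℤ} {k : ℕ} {X Y Z : V → ℤ}

/-- Positions in which the robber is on a run, before its end, and every cop has less progress. -/
def Running {m : ℕ} (E : ℤ → ℤ → Prop) (M h : ℤ) (X Y Z : V → ℤ) (r : V) (C : Fin m → V) : Prop :=
  ∃ y x₀ x₁, E y x₀ ∧ E y x₁ ∧ OnRun h y x₀ x₁ (X r) (Y r) (Z r) ∧ Z r < h ∧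
    ∀ i, progress E M h y x₀ x₁ (X (C i)) (Y (C i)) (Z (C i)) <
      progress E M h y x₀ x₁ (X r) (Y r) (Z r)

/-- The robber at the foot of a pillar facing at most `k` harmless cops can start a run. -/
theorem Layout.start_run (hE : Incidence E M k) (L : Layout G E M h X Y Z) (hh : 2 * M + 2 ≤ h)
    (hM : 0 ≤ M) {m : ℕ} (hm : m ≤ k) {y x₀ : ℤ} (h0 : E y x₀) {r : V} (hx : X r = x₀)
    (hy : Y r = y) (hz : Z r = 0) {C : Fin m → V}
    (hC : ∀ i, Harmless M y x₀ (X (C i)) (Y (C i)) (Z (C i))) :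
    Running E M h X Y Z r C := by
  classical
  have hb : ∀ i, ∃ b, ∀ x₁, E y x₁ →
      0 ≤ progress E M h y x₀ x₁ (X (C i)) (Y (C i)) (Z (C i)) → x₁ = b := by
    intro i
    by_cases hex : ∃ x₁, E y x₁ ∧ 0 ≤ progress E M h y x₀ x₁ (X (C i)) (Y (C i)) (Z (C i))
    · obtain ⟨b, hb, hb'⟩ := hex
      exact ⟨b, fun x₁ h1 h2 => threat_unique hE h0 h1 hb (L.mem _) (hC i) h2 hb'⟩
    · exact ⟨0, fun x₁ h1 h2 => absurd ⟨x₁, h1, h2⟩ hex⟩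
  choose b hb using hb
  obtain ⟨x₁, h1, hx1⟩ := hE.deg h0 (insert x₀ (Finset.univ.image b)) (by
    refine (Finset.card_insert_le _ _).trans ?_
    have := Finset.card_image_le (s := (Finset.univ : Finset (Fin m))) (f := b)
    simp at this
    omega)
  simp only [Finset.mem_insert, Finset.mem_image, Finset.mem_univ, true_and, not_or,
    not_exists] at hx1
  refine ⟨y, x₀, x₁, h0, h1, ⟨hy, Or.inl ⟨hz, by simp [hx]⟩⟩, by omega, fun i => ?_⟩
  have hr : progress E M h y x₀ x₁ (X r) (Y r) (Z r) = 0 := by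
    have : (0 : ℤ) ≠ h := by omega
    have h' : x₀ ≠ x₁ := fun h => hx1.1 h.symm
    simp [progress, hx, hy, hz, this, h']
  rw [hr]
  by_contra hcon
  exact hx1.2 i (hb i x₁ h1 (by omega)).symm

/-- Before the end of the run there is a next vertex. -/
theorem Layout.next (hE : Incidence E M k) (L : Layout G E M h X Y Z) (hh : 2 * M + 2 ≤ h)
    (hM : 0 ≤ M) {y x₀ x₁ : ℤ} (h0 : E y x₀) (h1 : E y x₁) {r : V}
    (hr : OnRun h y x₀ x₁ (X r) (Y r) (Z r)) (hz : Z r < h) :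
    ∃ r', G.Adj r r' ∧ OnRun h y x₀ x₁ (X r') (Y r') (Z r') ∧
      progress E M h y x₀ x₁ (X r') (Y r') (Z r') =
        progress E M h y x₀ x₁ (X r) (Y r) (Z r) + 1 := by
  have r0 := hE.range h0
  have r1 := hE.range h1
  obtain ⟨hy, hr⟩ := hr
  by_cases hx : X r = x₁
  · have hz0 : 0 ≤ Z r := by omega
    obtain ⟨r', hx', hy', hz'⟩ := L.surj (x := x₁) (y := y) (z := Z r + 1) (by
      rcases (show Z r + 1 < h ∨ Z r + 1 = h by omega) with h' | h'
      · exact Or.inr (Or.inr ⟨by omega, h', h1⟩)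
      · exact Or.inr (Or.inl ⟨h', (hE.range (hE.symm h1)).1, (hE.range (hE.symm h1)).2, y, h1⟩))
    refine ⟨r', (L.adj _ _).2 ⟨?_, ?_⟩, ⟨hy', Or.inr ⟨hx', by omega, by omega⟩⟩, ?_⟩
    · rintro rfl; omega
    · rw [hx, hx', hy, hy', hz']; ring_nf; omega
    · unfold progress
      rw [hx, hx', hy, hy', hz']
      split_ifs <;> omega
  · have hz0 : Z r = 0 := by omega
    have hbt : |X r - x₀| + |x₁ - X r| = |x₁ - x₀| := by
      rcases hr with h | h
      · exact h.2
      · exact absurd h.1 hx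
    have : ∃ x', (x' - X r = 1 ∨ x' - X r = -1) ∧ 0 ≤ x' ∧ x' ≤ M ∧
        |x' - x₀| = |X r - x₀| + 1 ∧ |x' - x₀| + |x₁ - x'| = |x₁ - x₀| := by
      rcases lt_or_gt_of_ne hx with h' | h'
      · refine ⟨X r + 1, by omega, ?_⟩
        grind
      · refine ⟨X r - 1, by omega, ?_⟩
        grind
    obtain ⟨x', d1, d2, d3, d4, d5⟩ := this
    obtain ⟨r', hx', hy', hz'⟩ := L.surj (x := x') (y := y) (z := 0)
      (Or.inl ⟨rfl, d2, d3, x₁, h1⟩)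
    refine ⟨r', (L.adj _ _).2 ⟨?_, ?_⟩, ⟨hy', Or.inl ⟨hz', by rw [hx']; exact d5⟩⟩, ?_⟩
    · rintro rfl; omega
    · rw [hx', hy, hy', hz', hz0]
      rcases d1 with d1 | d1
      · rw [show X r - x' = -1 by omega]; norm_num
      · rw [show X r - x' = 1 by omega]; norm_num
    · unfold progress
      rw [hx', hy, hy', hz', hz0]
      have h0h : (0 : ℤ) ≠ h := by omega
      have := abs_nonneg (X r - x₀)
      by_cases hx1 : x' = x₁
      · subst hx1
        simp only [h0h, hx, if_true, if_false]
        omega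
      · simp only [h0h, hx, hx1, if_true, if_false]
        omega

theorem Layout.dist_le (L : Layout G E M h X Y Z) {u v : V} (huv : v = u ∨ G.Adj u v) :
    (X u - X v) ^ 2 + (Y u - Y v) ^ 2 + (Z u - Z v) ^ 2 ≤ 1 := by
  rcases huv with rfl | huv
  · simp
  · exact ((L.adj _ _).1 huv).2

/-- Playing one step of a run preserves safety; at the top, the next run is started in the flipped
layout. -/
theorem Layout.run_step (hE : Incidence E M k) (L : Layout G E M h X Y Z) (hh : 2 * M + 2 ≤ h)
    (hM : 0 ≤ M) {m : ℕ} (hm : m ≤ k) {r : V} {C : Fin m → V} (hQ : Running E M h X Y Z r C) :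
    ∃ r', (r' = r ∨ G.Adj r r') ∧ (∀ i, C i ≠ r') ∧
      ∀ C' : Fin m → V, (∀ i, C' i = C i ∨ G.Adj (C i) (C' i)) → (∀ i, C' i ≠ r') ∧
        (Running E M h X Y Z r' C' ∨ Running E M h Y X (fun v => h - Z v) r' C') := by
  obtain ⟨y, x₀, x₁, h0, h1, hr, hz, hC⟩ := hQ
  obtain ⟨r', hadj, hr', hp⟩ := L.next hE hh hM h0 h1 hr hz
  refine ⟨r', Or.inr hadj, ?_, fun C' hC' => ?_⟩
  · rintro i rfl
    have := hC i
    omega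
  have hlt : ∀ i, progress E M h y x₀ x₁ (X (C' i)) (Y (C' i)) (Z (C' i)) <
      progress E M h y x₀ x₁ (X r') (Y r') (Z r') := by
    intro i
    have := progress_step hE hh hM h0 h1 (L.mem (C i)) (L.mem (C' i)) (L.dist_le (hC' i))
    have := hC i
    omega
  refine ⟨?_, ?_⟩
  · rintro i rfl
    exact lt_irrefl _ (hlt i)
  by_cases hend : Z r' < h
  · exact Or.inl ⟨y, x₀, x₁, h0, h1, hr', hend, hlt⟩
  · right
    obtain ⟨hy', hr'⟩ := hr'
    have hz' : Z r' = h := by omega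
    have hx' : X r' = x₁ := by omega
    refine (L.flip hE).start_run hE hh hM hm (hE.symm h1) hy' hx' (by simp [hz']) fun i => ?_
    refine harmless_of_progress_lt (x₀ := x₀) hh (L.mem _) ?_
    have := hlt i
    rwa [show progress E M h y x₀ x₁ (X r') (Y r') (Z r') = |x₁ - x₀| + h by
      simp [progress, hz', hx']] at this

theorem Layout.not_copWin (hE : Incidence E M k) (L : Layout G E M h X Y Z) (hh : 2 * M + 2 ≤ h)
    (hM : 0 ≤ M) {m : ℕ} (hm : m ≤ k) : ¬ CopWin G m := by
  classical
  refine not_copWin_of_safe G m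
    (fun r C => Running E M h X Y Z r C ∨ Running E M h Y X (fun v => h - Z v) r C) ?_ ?_
  · intro C
    obtain ⟨y, x₀, h0, hy⟩ := hE.start (Finset.univ.image fun i => Y (C i)) (by
      refine Finset.card_image_le.trans ?_
      simpa using hm)
    simp only [Finset.mem_image, Finset.mem_univ, true_and, not_exists] at hy
    obtain ⟨r, hx', hy', hz'⟩ := L.surj (x := x₀) (y := y) (z := 0)
      (Or.inl ⟨rfl, (hE.range h0).1, (hE.range h0).2, x₀, h0⟩)
    -- a cop can enter the plane of the chosen rod only along a top rod
    have hfar : ∀ C' : Fin m → V, (∀ i, C' i = C i ∨ G.Adj (C i) (C' i)) →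
        ∀ i, Y (C' i) = y → Z (C' i) = h := by
      intro C' hC' i hi
      have := hy i
      have := (L.mem (C i)).step hE (by omega) (L.mem (C' i)) (L.dist_le (hC' i))
      omega
    refine ⟨r, ?_, fun C' hC' => ⟨?_, Or.inl ?_⟩⟩
    · rintro i rfl
      exact hy i hy'
    · rintro i rfl
      have := hfar C' hC' i hy'
      omega
    · refine L.start_run hE hh hM hm h0 hx' hy' hz' fun i hi => Or.inl ?_
      have := hfar C' hC' i hi
      omega
  · rintro r C (hQ | hQ)
    · exact L.run_step hE hh hM hm hQ
    · obtain ⟨r', h1, h2, h3⟩ := (L.flip hE).run_step hE hh hM hm hQ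
      refine ⟨r', h1, h2, fun C' hC' => ⟨(h3 C' hC').1, ?_⟩⟩
      have := (h3 C' hC').2
      simp only [sub_sub_cancel] at this
      exact this.symm

end game

/-! ### Connectedness of the scaffold -/

section connected

variable {V : Type*} {G : SimpleGraph V} {E : ℤ → ℤ → Prop} {M h : ℤ} {k : ℕ} {X Y Z : V → ℤ}

/-- A bottom rod is connected. -/
theorem Layout.rod (L : Layout G E M h X Y Z) {y : ℤ} {u v : V} (hy : ∃ x, E y x)
    (hu : Z u = 0) (hv : Z v = 0) (huy : Y u = y) (hvy : Y v = y) (hur : 0 ≤ X u ∧ X u ≤ M)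
    (hvr : 0 ≤ X v ∧ X v ≤ M) : G.Reachable u v := by
  have key : ∀ n : ℕ, ∀ u v : V, Z u = 0 → Z v = 0 → Y u = y → Y v = y → X u = X v + n →
      0 ≤ X v → X u ≤ M → G.Reachable u v := by
    intro n
    induction n with
    | zero =>
      intro u v h1 h2 h3 h4 h5 h6 h7
      rw [L.inj (u := u) (v := v) (by simpa using h5) (by omega) (by omega)]
    | succ n ih =>
      intro u v h1 h2 h3 h4 h5 h6 h7
      push_cast at h5
      obtain ⟨w, hx, hy', hz⟩ := L.surj (x := X v + 1) (y := y) (z := 0)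
        (Or.inl ⟨rfl, by omega, by omega, hy⟩)
      refine (ih u w h1 hz h3 hy' (by omega) (by omega) h7).trans
        (SimpleGraph.Adj.reachable ((L.adj _ _).2 ⟨?_, ?_⟩))
      · rintro rfl; omega
      · rw [hx, hy', hz, h4, h2]; ring_nf; omega
  rcases le_total (X v) (X u) with hle | hle
  · exact key (X u - X v).toNat u v hu hv huy hvy (by omega) hvr.1 hur.2
  · exact (key (X v - X u).toNat v u hv hu hvy huy (by omega) hur.1 hvr.2).symm

/-- Each point of a pillar is connected to its foot. -/
theorem Layout.pillar (hE : Incidence E M k) (L : Layout G E M h X Y Z) {u v : V}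
    (he : E (Y u) (X u)) (hu : 0 ≤ Z u ∧ Z u ≤ h) (hv : Z v = 0) (hx : X v = X u)
    (hy : Y v = Y u) : G.Reachable u v := by
  have key : ∀ n : ℕ, ∀ u : V, X v = X u → Y v = Y u → Z u = n → Z u ≤ h →
      G.Reachable u v := by
    intro n
    induction n with
    | zero =>
      intro u h1 h2 h3 h4
      rw [L.inj h1 h2 (show Z v = Z u by simpa [hv] using h3.symm)]
    | succ n ih =>
      intro u h1 h2 h3 h4
      push_cast at h3
      have he' : E (Y u) (X u) := by rw [← h1, ← h2, hx, hy]; exact he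
      obtain ⟨w, hx', hy', hz⟩ := L.surj (x := X u) (y := Y u) (z := n) (by
        rcases Nat.eq_zero_or_pos n with h0 | h0
        · exact Or.inl ⟨by omega, (hE.range he').1, (hE.range he').2, X u, he'⟩
        · exact Or.inr (Or.inr ⟨by omega, by omega, he'⟩))
      refine (SimpleGraph.Adj.reachable ((L.adj _ _).2 ⟨?_, ?_⟩)).trans
        (ih w (by omega) (by omega) hz (by omega))
      · rintro rfl; omega
      · rw [hx', hy', hz, h3]; ring_nf; omega
  exact key (Z u).toNat u hx hy (by omega) hu.2

/-- Two bottom rods meeting a common top rod are connected. -/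
theorem Layout.via_top (hE : Incidence E M k) (L : Layout G E M h X Y Z) (hh : 0 < h)
    {x y y' : ℤ} {u v : V} (h1 : E y x) (h2 : E y' x) (hu : Z u = 0) (hv : Z v = 0)
    (hux : X u = x) (hvx : X v = x) (huy : Y u = y) (hvy : Y v = y') : G.Reachable u v := by
  obtain ⟨a, ax, ay, az⟩ := L.surj (x := x) (y := y) (z := h)
    (Or.inr (Or.inl ⟨rfl, (hE.range (hE.symm h1)).1, (hE.range (hE.symm h1)).2, y, h1⟩))
  obtain ⟨b, bx, bz, bz'⟩ := L.surj (x := x) (y := y') (z := h)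
    (Or.inr (Or.inl ⟨rfl, (hE.range (hE.symm h2)).1, (hE.range (hE.symm h2)).2, y', h2⟩))
  have r1 : G.Reachable a u :=
    L.pillar hE (by rw [ay, ax]; exact h1) (by omega) hu (by omega) (by omega)
  have r2 : G.Reachable b v :=
    L.pillar hE (by rw [bz, bx]; exact h2) (by omega) hv (by omega) (by omega)
  have r3 : G.Reachable a b :=
    (L.flip hE).rod (y := x) ⟨y, hE.symm h1⟩ (by simp [az]) (by simp [bz']) ax bx
      (by rw [ay]; exact hE.range (hE.symm h1)) (by rw [bz]; exact hE.range (hE.symm h2))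
  exact r1.symm.trans (r3.trans r2)

theorem Layout.connected (hE : Incidence E M k) (L : Layout G E M h X Y Z) (hh : 0 < h) :
    G.Connected := by
  have foot : ∀ {y x}, E y x → ∃ w, X w = x ∧ Y w = y ∧ Z w = 0 := fun {y x} he =>
    L.surj (Or.inl ⟨rfl, (hE.range he).1, (hE.range he).2, x, he⟩)
  have hdown : ∀ u, ∃ w y x, E y x ∧ X w = x ∧ Y w = y ∧ Z w = 0 ∧ G.Reachable u w := by
    intro u
    rcases L.mem u with ⟨h1, h2, h3, x', h4⟩ | ⟨h1, h2, h3, y', h4⟩ | ⟨h1, h2, h3⟩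
    · obtain ⟨w, wx, wy, wz⟩ := foot h4
      exact ⟨w, _, _, h4, wx, wy, wz, L.rod ⟨x', h4⟩ h1 wz rfl wy ⟨h2, h3⟩
        (by rw [wx]; exact hE.range h4)⟩
    · obtain ⟨w, wx, wy, wz⟩ := foot h4
      obtain ⟨a, ax, ay, az⟩ := L.surj (x := X u) (y := y') (z := h)
        (Or.inr (Or.inl ⟨rfl, (hE.range (hE.symm h4)).1, (hE.range (hE.symm h4)).2, y', h4⟩))
      refine ⟨w, _, _, h4, wx, wy, wz, ?_⟩
      have r1 : G.Reachable u a := (L.flip hE).rod (y := X u) ⟨y', hE.symm h4⟩ (by simp [h1])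
        (by simp [az]) rfl ax ⟨h2, h3⟩ (by rw [ay]; exact hE.range (hE.symm h4))
      exact r1.trans
        (L.pillar hE (by rw [ay, ax]; exact h4) (by omega) wz (by omega) (by omega))
    · obtain ⟨w, wx, wy, wz⟩ := foot h3
      exact ⟨w, _, _, h3, wx, wy, wz, L.pillar hE h3 (by omega) wz wx wy⟩
  have hne : Nonempty V := by
    obtain ⟨y, x, he, -⟩ := hE.start ∅ (by simp)
    obtain ⟨w, -⟩ := foot he
    exact ⟨w⟩
  refine ⟨fun u v => ?_⟩
  obtain ⟨a, y, x, e1, ax, ay, az, ra⟩ := hdown u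
  obtain ⟨b, y', x', e2, bx, bz, bz', rb⟩ := hdown v
  obtain ⟨x₁, y₁, x₂, f1, f2, f3, f4⟩ := hE.conn e1 e2
  obtain ⟨w1, w1x, w1y, w1z⟩ := foot f1
  obtain ⟨w2, w2x, w2y, w2z⟩ := foot f2
  obtain ⟨w3, w3x, w3y, w3z⟩ := foot f3
  obtain ⟨w4, w4x, w4y, w4z⟩ := foot f4
  have s1 : G.Reachable a w1 := L.rod ⟨x, e1⟩ az w1z ay w1y (by rw [ax]; exact hE.range e1)
    (by rw [w1x]; exact hE.range f1)
  have s2 : G.Reachable w1 w2 := L.via_top hE hh f1 f2 w1z w2z w1x w2x w1y w2y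
  have s3 : G.Reachable w2 w3 := L.rod ⟨x₁, f2⟩ w2z w3z w2y w3y
    (by rw [w2x]; exact hE.range f2) (by rw [w3x]; exact hE.range f3)
  have s4 : G.Reachable w3 w4 := L.via_top hE hh f3 f4 w3z w4z w3x w4x w3y w4y
  have s5 : G.Reachable w4 b := L.rod ⟨x', e2⟩ w4z bz' w4y bz
    (by rw [w4x]; exact hE.range f4) (by rw [bx]; exact hE.range e2)
  exact ra.trans (s1.trans (s2.trans (s3.trans (s4.trans (s5.trans rb.symm)))))

end connected

/-! ### An incidence relation from an affine plane -/

/-- Over a field, the relation `y + b = m * x` between `(x, y)` and `(m, b)` is symmetric; it is the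
incidence of points and non-vertical lines of the affine plane. -/
def AffInc {K : Type*} [Field K] (P Q : K × K) : Prop := P.2 + Q.2 = Q.1 * P.1

theorem AffInc.c4 {K : Type*} [Field K] {P P' Q Q' : K × K} (h1 : AffInc P Q) (h2 : AffInc P Q')
    (h3 : AffInc P' Q) (h4 : AffInc P' Q') : P = P' ∨ Q = Q' := by
  obtain ⟨x, y⟩ := P
  obtain ⟨x', y'⟩ := P'
  obtain ⟨m, b⟩ := Q
  obtain ⟨m', b'⟩ := Q'
  simp only [AffInc, Prod.mk.injEq] at *
  have h5 : (m - m') * (x - x') = 0 := by linear_combination h2 + h3 - h1 - h4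
  rcases mul_eq_zero.1 h5 with h | h
  · right
    obtain rfl : m = m' := sub_eq_zero.1 h
    exact ⟨rfl, by linear_combination h1 - h2⟩
  · left
    obtain rfl : x = x' := sub_eq_zero.1 h
    exact ⟨rfl, by linear_combination h1 - h3⟩

/-- Two points that are not on a common vertical line are collinear. -/
theorem AffInc.join {K : Type*} [Field K] {P P' : K × K} (h : P.1 ≠ P'.1) :
    ∃ Q, AffInc P Q ∧ AffInc P' Q := by
  have h' : P.1 - P'.1 ≠ 0 := sub_ne_zero.2 h
  refine ⟨((P.2 - P'.2) / (P.1 - P'.1), (P.2 - P'.2) / (P.1 - P'.1) * P.1 - P.2), ?_, ?_⟩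
  · simp only [AffInc]; ring
  · simp only [AffInc]; field_simp; ring

theorem AffInc.conn {K : Type*} [Field K] (P P' : K × K) :
    ∃ Q P₁ Q', AffInc P Q ∧ AffInc P₁ Q ∧ AffInc P₁ Q' ∧ AffInc P' Q' := by
  by_cases h : P.1 = P'.1
  · have h1 : P.1 ≠ (P.1 + 1, (0 : K)).1 := by simp
    have h2 : P'.1 ≠ (P.1 + 1, (0 : K)).1 := by simp [← h]
    obtain ⟨Q, q1, q2⟩ := AffInc.join h1
    obtain ⟨Q', q3, q4⟩ := AffInc.join h2
    exact ⟨Q, _, Q', q1, q2, q4, q3⟩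
  · obtain ⟨Q, q1, q2⟩ := AffInc.join h
    exact ⟨Q, P, Q, q1, q1, q1, q2⟩

theorem exists_incidence (k : ℕ) : ∃ (E : ℤ → ℤ → Prop) (M : ℤ), 0 ≤ M ∧ Incidence E M k := by
  classical
  obtain ⟨p, hp, hpp⟩ := Nat.exists_infinite_primes (k + 2)
  have : Fact p.Prime := ⟨hpp⟩
  let ι := ZMod p × ZMod p
  let e : ι ≃ Fin (Fintype.card ι) := Fintype.equivFin ι
  let f : ι → ℤ := fun a => 2 * ((e a : ℕ) : ℤ)
  have hf : Function.Injective f := by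
    intro a b hab
    have : (e a : ℕ) = e b := by simp only [f] at hab; omega
    exact e.injective (Fin.ext this)
  -- an injective family indexed by the field escapes every small finite set
  have hesc : ∀ g : ZMod p → ι, Function.Injective g → ∀ S : Finset ℤ, S.card ≤ k + 1 →
      ∃ m, f (g m) ∉ S := by
    intro g hg S hS
    by_contra! hcon
    have h1 : (Finset.univ.image (f ∘ g)).card ≤ S.card :=
      Finset.card_le_card (by
        intro z hz
        obtain ⟨m, -, rfl⟩ := Finset.mem_image.1 hz
        exact hcon m)
    rw [Finset.card_image_of_injective _ (hf.comp hg), Finset.card_univ, ZMod.card] at h1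
    omega
  refine ⟨fun y x => ∃ P Q : ι, y = f P ∧ x = f Q ∧ AffInc P Q, 2 * (Fintype.card ι : ℤ),
    by positivity, ?_, ?_, ?_, ?_, ?_, ?_, ?_⟩
  · rintro _ _ ⟨P, Q, rfl, rfl, h⟩
    refine ⟨Q, P, rfl, rfl, ?_⟩
    simp only [AffInc] at *
    linear_combination h
  · rintro _ _ ⟨P, Q, rfl, rfl, h⟩
    simp only [f]; omega
  · rintro _ _ ⟨P, Q, rfl, rfl, h⟩
    have := (e Q).2
    simp only [f]; omega
  · rintro y y' x x' ⟨P, Q, rfl, rfl, h1⟩ ⟨P2, Q', hP2, rfl, h2⟩ ⟨P', Q2, rfl, hQ2, h3⟩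
      ⟨P3, Q3, hP3, hQ3, h4⟩
    obtain rfl := hf hP2
    obtain rfl := hf hQ2
    obtain rfl := hf hP3
    obtain rfl := hf hQ3
    rcases h1.c4 h2 h3 h4 with rfl | rfl
    · exact Or.inl rfl
    · exact Or.inr rfl
  · rintro _ _ ⟨P, Q, rfl, rfl, -⟩ S hS
    obtain ⟨m, hm⟩ := hesc (fun m => (m, m * P.1 - P.2))
      (fun a b hab => (Prod.mk.inj hab).1) S hS
    exact ⟨_, ⟨P, _, rfl, rfl, by simp only [AffInc]; ring⟩, hm⟩
  · intro S hS
    obtain ⟨m, hm⟩ := hesc (fun m => (m, 0)) (fun a b hab => (Prod.mk.inj hab).1) S (by omega)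
    exact ⟨_, _, ⟨(m, 0), (0, 0), rfl, rfl, by simp [AffInc]⟩, hm⟩
  · rintro _ _ _ _ ⟨P, Q, rfl, rfl, -⟩ ⟨P', Q', rfl, rfl, -⟩
    obtain ⟨R, P₁, R', h1, h2, h3, h4⟩ := AffInc.conn P P'
    exact ⟨f R, f P₁, f R', ⟨_, _, rfl, rfl, h1⟩, ⟨_, _, rfl, rfl, h2⟩, ⟨_, _, rfl, rfl, h3⟩,
      ⟨_, _, rfl, rfl, h4⟩⟩

/-! ### Realization by unit balls -/

theorem Scaffold.finite {E : ℤ → ℤ → Prop} {M h : ℤ} {k : ℕ} (hE : Incidence E M k) (hh : 0 ≤ h) :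
    {p : ℤ × ℤ × ℤ | Scaffold E M h p.1 p.2.1 p.2.2}.Finite := by
  refine ((Set.finite_Icc 0 M).prod ((Set.finite_Icc 0 M).prod (Set.finite_Icc 0 h))).subset ?_
  rintro ⟨x, y, z⟩ hp
  have h1 := Scaffold.range hE hp
  have h2 := Scaffold.range hE (hp.flip hE)
  have h3 : 0 ≤ z ∧ z ≤ h := by rcases hp with h | h | h <;> simp only at h <;> omega
  exact ⟨h1, h2, h3⟩

theorem exists_layout {E : ℤ → ℤ → Prop} {M h : ℤ} {k : ℕ} (hE : Incidence E M k) (hh : 0 ≤ h) :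
    ∃ (n : ℕ) (G : SimpleGraph (Fin n)) (X Y Z : Fin n → ℤ), Layout G E M h X Y Z := by
  have hfin := Scaffold.finite hE hh
  let T := hfin.toFinset
  have hT : ∀ p, p ∈ T ↔ Scaffold E M h p.1 p.2.1 p.2.2 := fun p => by simp [T]
  let e := T.equivFin.symm
  let P : Fin T.card → ℤ × ℤ × ℤ := fun i => (e i : ℤ × ℤ × ℤ)
  refine ⟨T.card, SimpleGraph.mk (fun u v => u ≠ v ∧ ((P u).1 - (P v).1) ^ 2 +
    ((P u).2.1 - (P v).2.1) ^ 2 + ((P u).2.2 - (P v).2.2) ^ 2 ≤ 1) ?_ ?_,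
    fun i => (P i).1, fun i => (P i).2.1, fun i => (P i).2.2, ?_, ?_, ?_, ?_⟩
  · refine ⟨fun u v ⟨h1, h2⟩ => ⟨h1.symm, ?_⟩⟩
    linarith
  · exact ⟨fun u hu => hu.1 rfl⟩
  · exact fun v => (hT _).1 (e v).2
  · intro x y z hA
    have : ((x, y, z) : ℤ × ℤ × ℤ) ∈ T := (hT _).2 hA
    refine ⟨e.symm ⟨_, this⟩, ?_⟩
    simp [P]
  · intro u v h1 h2 h3
    exact e.injective (Subtype.ext (Prod.ext h1 (Prod.ext h2 h3)))
  · exact fun u v => Iff.rfl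

/-- Unit balls centred at the points of `2ℤ³` meet iff the centres are equal or adjacent in the
cubic lattice `2ℤ³`. -/
theorem balls_meet_iff (x y z x' y' z' : ℤ) :
    (Metric.closedBall (!₂[2 * (x : ℝ), 2 * (y : ℝ), 2 * (z : ℝ)] : EuclideanSpace ℝ (Fin 3)) 1 ∩
      Metric.closedBall (!₂[2 * (x' : ℝ), 2 * (y' : ℝ), 2 * (z' : ℝ)]) 1).Nonempty ↔
      (x - x') ^ 2 + (y - y') ^ 2 + (z - z') ^ 2 ≤ 1 := by
  rw [← Set.not_disjoint_iff_nonempty_inter,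
    disjoint_closedBall_closedBall_iff zero_le_one zero_le_one, not_lt, EuclideanSpace.dist_eq,
    Real.sqrt_le_left (by norm_num)]
  simp only [Fin.sum_univ_three, Real.dist_eq, sq_abs]
  rw [← Int.cast_le (R := ℝ)]
  push_cast
  constructor <;> intro h <;> nlinarith

theorem lt_copNumber {n : ℕ} {G : SimpleGraph (Fin n)} {k : ℕ} (h : ∀ m ≤ k, ¬ CopWin G m) :
    k < copNumber G := by
  -- one motionless cop on every vertex wins, so the infimum is attained
  have hne : {m | CopWin G m}.Nonempty := by
    refine ⟨n, id, fun _ => id, fun rob _ => ⟨?_, 0, rob 0, Or.inl rfl⟩⟩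
    have : ∀ m, copSeq id (fun _ => id) rob m = id := by
      intro m; cases m <;> rfl
    intro m i
    left
    rw [this, this]
  by_contra hcon
  exact h _ (not_lt.1 hcon) (Nat.sInf_mem hne)

/-- For every `k` there is a finite connected graph with cop number greater than `k`
which is an intersection graph of closed Euclidean unit balls in `ℝ³`; hence the
maximum cop number of intersection graphs of 3-dimensional unit balls is unbounded. -/
theorem copNumber_unbounded_unit_balls (k : ℕ) :
    ∃ (n : ℕ) (G : SimpleGraph (Fin n)), G.Connected ∧ k < copNumber G ∧
      ∃ S : Fin n → Set (EuclideanSpace ℝ (Fin 3)),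
        (∀ v, ∃ c : EuclideanSpace ℝ (Fin 3), S v = Metric.closedBall c 1) ∧
        ∀ u v, G.Adj u v ↔ u ≠ v ∧ (S u ∩ S v).Nonempty := by
  obtain ⟨E, M, hM, hE⟩ := exists_incidence k
  obtain ⟨n, G, X, Y, Z, L⟩ := exists_layout (h := 2 * M + 2) hE (by omega)
  refine ⟨n, G, L.connected hE (by omega),
    lt_copNumber fun m hm => L.not_copWin hE le_rfl hM hm,
    fun v => Metric.closedBall !₂[2 * (X v : ℝ), 2 * (Y v : ℝ), 2 * (Z v : ℝ)] 1,
    fun v => ⟨_, rfl⟩, fun u v => ?_⟩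
  rw [L.adj, balls_meet_iff]
end
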